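/- For every q > 0, the function V_q is convex on ℝ, strictly decreasing on ℝ, and strictly positive: V_q(u) > 0 for every u ∈ ℝ. -/

import Mathlib

/-!
Put `c = q / (1 + q)`. The normalising constant of the tail equals `c ^ (q + 1) / q`, so the tail
`u ^ (-q) * (c ^ (q + 1) / q)` has value `1 - c` and slope `-1` at `u = c`: it meets the line
`1 - u` tangentially. Hence `V_q` is differentiable on `ℝ` (`hasDerivAt_Vq`), with derivative
`-(max u c) ^ (-q - 1) * c ^ (q + 1)`, which is monotone and negative. This gives convexity and
strict decrease; positivity is read off from the two branches, since `c < 1`.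
-/

/-- The generalized distance-weighted discrimination (DWD) loss. -/
noncomputable def Vq (q u : ℝ) : ℝ :=
  if u ≤ q / (1 + q) then 1 - u else u ^ (-q) * (q ^ q / (q + 1) ^ (q + 1))

/-- The derivative of `Vq q`; the truncation `max u c` with `c = q / (1 + q)` makes it equal `-1` on
the linear part and encodes both branches in one formula. -/
noncomputable def VqDeriv (q u : ℝ) : ℝ :=
  -((max u (q / (1 + q))) ^ (-q - 1) * (q / (1 + q)) ^ (q + 1))

lemma tail_const_eq {q : ℝ} (hq : 0 < q) :
    q ^ q / (q + 1) ^ (q + 1) = (q / (1 + q)) ^ (q + 1) / q := by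
  rw [Real.div_rpow hq.le (by positivity), Real.rpow_add_one hq.ne', add_comm 1 q]
  have : (q + 1) ^ (q + 1) ≠ 0 := by positivity
  field_simp

lemma rpow_neg_sub_one_mul_rpow {c : ℝ} (hc : 0 < c) (q : ℝ) :
    c ^ (-q - 1) * c ^ (q + 1) = 1 := by
  rw [← Real.rpow_add hc, show -q - 1 + (q + 1) = 0 by ring, Real.rpow_zero]

lemma hasDerivAt_tail {q u : ℝ} (hq : 0 < q) (hu : 0 < u) :
    HasDerivAt (fun x : ℝ => x ^ (-q) * (q ^ q / (q + 1) ^ (q + 1)))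
      (-(u ^ (-q - 1) * (q / (1 + q)) ^ (q + 1))) u := by
  rw [tail_const_eq hq]
  refine ((Real.hasDerivAt_rpow_const (p := -q) (Or.inl hu.ne')).mul_const _).congr_deriv ?_
  field_simp

/-- The two branches of `Vq` agree at the junction point. -/
lemma tail_at_junction {q : ℝ} (hq : 0 < q) :
    (q / (1 + q)) ^ (-q) * (q ^ q / (q + 1) ^ (q + 1)) = 1 - q / (1 + q) := by
  have hc : 0 < q / (1 + q) := by positivity
  rw [tail_const_eq hq, ← mul_div_assoc, ← Real.rpow_add hc,
    show -q + (q + 1) = 1 by ring, Real.rpow_one]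
  field_simp
  ring

lemma hasDerivAt_Vq {q : ℝ} (hq : 0 < q) (u : ℝ) : HasDerivAt (Vq q) (VqDeriv q u) u := by
  have hc : 0 < q / (1 + q) := by positivity
  have hlin : ∀ x : ℝ, HasDerivAt (fun y : ℝ => 1 - y) (-1) x := fun x => by
    simpa using (hasDerivAt_id x).const_sub 1
  rcases lt_trichotomy u (q / (1 + q)) with h | h | h
  · rw [VqDeriv, max_eq_right h.le, rpow_neg_sub_one_mul_rpow hc]
    refine (hlin u).congr_of_eventuallyEq ?_
    filter_upwards [Iio_mem_nhds h] with x hx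
    exact if_pos (le_of_lt (Set.mem_Iio.1 hx))
  · subst h
    rw [VqDeriv, max_self, rpow_neg_sub_one_mul_rpow hc, ← hasDerivWithinAt_univ,
      ← Set.Iic_union_Ici (a := q / (1 + q))]
    refine HasDerivWithinAt.union ?_ ?_
    · exact (hlin _).hasDerivWithinAt.congr (fun x hx => if_pos hx) (if_pos le_rfl)
    · have ht := hasDerivAt_tail hq hc
      rw [rpow_neg_sub_one_mul_rpow hc] at ht
      have hval : Vq q (q / (1 + q)) =
          (q / (1 + q)) ^ (-q) * (q ^ q / (q + 1) ^ (q + 1)) := by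
        rw [tail_at_junction hq, Vq, if_pos le_rfl]
      refine ht.hasDerivWithinAt.congr (fun x hx => ?_) hval
      rcases (Set.mem_Ici.1 hx).eq_or_lt with rfl | hx
      · exact hval
      · exact if_neg hx.not_ge
  · rw [VqDeriv, max_eq_left h.le]
    refine (hasDerivAt_tail hq (hc.trans h)).congr_of_eventuallyEq ?_
    filter_upwards [Ioi_mem_nhds h] with x hx
    exact if_neg (not_le_of_gt (Set.mem_Ioi.1 hx))

lemma VqDeriv_neg {q : ℝ} (hq : 0 < q) (u : ℝ) : VqDeriv q u < 0 := by
  have hc : 0 < q / (1 + q) := by positivity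
  have hm : 0 < max u (q / (1 + q)) := lt_max_of_lt_right hc
  exact neg_lt_zero.2 (by positivity)

lemma VqDeriv_monotone {q : ℝ} (hq : 0 < q) : Monotone (VqDeriv q) := by
  intro u v huv
  have hc : 0 < q / (1 + q) := by positivity
  exact neg_le_neg (mul_le_mul_of_nonneg_right
    (Real.rpow_le_rpow_of_nonpos (lt_max_of_lt_right hc) (max_le_max_right _ huv) (by linarith))
    (by positivity))

/-- For every `q > 0`, the generalized DWD loss `V_q` is convex on `ℝ`, strictly
decreasing on `ℝ`, and strictly positive. -/
theorem Vq_convex_strictAnti_pos (q : ℝ) (hq : 0 < q) :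
    ConvexOn ℝ Set.univ (Vq q) ∧ StrictAnti (Vq q) ∧ ∀ u : ℝ, 0 < Vq q u := by
  have hderiv : deriv (Vq q) = VqDeriv q := funext fun u => (hasDerivAt_Vq hq u).deriv
  refine ⟨?_, ?_, fun u => ?_⟩
  · exact Monotone.convexOn_univ_of_deriv (fun u => (hasDerivAt_Vq hq u).differentiableAt)
      (hderiv ▸ VqDeriv_monotone hq)
  · exact strictAnti_of_deriv_neg fun u => hderiv ▸ VqDeriv_neg hq u
  · unfold Vq
    split_ifs with h
    · have : q / (1 + q) < 1 := (div_lt_one (by positivity)).2 (by linarith)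
      linarith
    · have hu : 0 < u := lt_trans (by positivity) (not_le.1 h)
      positivity
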